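/- (Double covering of the orthogonal group) Let n = p + q and let Pin(p,q) := {T ∈ Cl_{p,q} : T is invertible, T lies in the even or the odd part of the ℤ/2-grading, involute(T)·ι(x)·T^{−1} ∈ ι(ℝⁿ) for all x ∈ ℝⁿ, and reverse(T)·T = ±e}. Then: (1) (surjectivity) for every linear map f : ℝⁿ → ℝⁿ preserving the quadratic form Q_{p,q} (i.e. f ∈ O(p,q)) there exists T ∈ Pin(p,q) such that involute(T)·ι(x)·T^{−1} = ι(f(x)) for all x ∈ ℝⁿ; (2) (kernel = {±e}) if T ∈ Pin(p,q) satisfies involute(T)·ι(x)·T^{−1} = ι(x) for all x ∈ ℝⁿ, then T = e or T = −e. -/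

import Mathlib

open CliffordAlgebra

/-- The quadratic form of signature `(p, q)` on `ℝ^(p+q)`:
`Q(x) = x₁² + ⋯ + x_p² − x_{p+1}² − ⋯ − x_{p+q}²`. -/
noncomputable def Qpq (p q : ℕ) : QuadraticForm ℝ (Fin (p + q) → ℝ) :=
  QuadraticMap.weightedSumSquares ℝ (fun i : Fin (p + q) => if (i : ℕ) < p then (1 : ℝ) else -1)

/-- The real Clifford algebra `Cl_{p,q}`. -/
noncomputable abbrev Cl (p q : ℕ) : Type := CliffordAlgebra (Qpq p q)

/-- The generators `e_a` of `Cl_{p,q}`. -/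
noncomputable def gen (p q : ℕ) (i : Fin (p + q)) : Cl p q :=
  ι (Qpq p q) (Pi.single i 1)

/-- The basis element `e_A` of `Cl_{p,q}` attached to an ordered multi-index `A`:
the product of the generators with indices in `A`, in increasing order (`e_∅ = 1`). -/
noncomputable def basisEl (p q : ℕ) (A : Finset (Fin (p + q))) : Cl p q :=
  ((A.sort (· ≤ ·)).map (gen p q)).prod


/-- The group `Pin(p,q)`: invertible homogeneous elements whose twisted conjugation
preserves the grade-1 subspace and with `reverse(T)·T = ±e`. -/
def pinGrp (p q : ℕ) : Set (Cl p q) :=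
  {T | IsUnit T ∧
    (T ∈ evenOdd (Qpq p q) 0 ∨ T ∈ evenOdd (Qpq p q) 1) ∧
    (∀ x : Fin (p + q) → ℝ, ∃ y : Fin (p + q) → ℝ,
      involute T * ι (Qpq p q) x * Ring.inverse T = ι (Qpq p q) y) ∧
    (reverse T * T = 1 ∨ reverse T * T = -1)}

/-!
By the Cartan–Dieudonné theorem an isometry is a product of reflections in anisotropic vectors `u`.
Over `ℝ` one may rescale to `Q u = ±1`; then `ι u` lies in the Pin group and its twisted conjugation
is the reflection in `u`.

An element `T` whose twisted conjugation is trivial satisfies `ι v * T - involute T * ι v = 0`. The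
left-hand side is the contraction of `T` by the polar functional of `v`, and by nondegeneracy these
are all the functionals. Contracting `A + ι v * B`, where `A` and `B` do not involve `v`, by the
functional dual to `v` reads off `B`, so removing the basis vectors one at a time shows that `T` is
a scalar `c`, and `reverse T * T = ±1` becomes `c ^ 2 = ±1`, so `c = ±1`.
-/

section Reflection

open QuadraticMap

variable {K V : Type*} [Field K] [AddCommGroup V] [Module K V] (Q : QuadraticForm K V)

/-- The reflection of the quadratic space `(V, Q)` in the hyperplane orthogonal to `u`. It is the
intended map only for anisotropic `u`: if `Q u = 0`, it is the identity. -/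
def quadraticReflection (u : V) : Module.End K V :=
  Module.preReflection u ((Q u)⁻¹ • Q.polarBilin u)

theorem quadraticReflection_apply (u x : V) :
    quadraticReflection Q u x = x - ((Q u)⁻¹ * polar Q u x) • u := rfl

variable {Q}

theorem quadraticReflection_smul {c : K} (hc : c ≠ 0) (u : V) :
    quadraticReflection Q (c • u) = quadraticReflection Q u := by
  ext x
  rw [quadraticReflection_apply, quadraticReflection_apply, QuadraticMap.map_smul,
    polar_smul_left, smul_smul]
  congr 2
  simp only [smul_eq_mul, mul_inv]
  field_simp

theorem quadraticReflection_apply_of_polar_eq_zero {u x : V} (h : polar Q u x = 0) :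
    quadraticReflection Q u x = x := by
  rw [quadraticReflection_apply, h, mul_zero, zero_smul, sub_zero]

theorem inv_smul_polarBilin_apply_self {u : V} (hu : Q u ≠ 0) :
    ((Q u)⁻¹ • Q.polarBilin u) u = 2 := by
  simp only [LinearMap.smul_apply, polarBilin_apply_apply, polar_self, nsmul_eq_mul, smul_eq_mul]
  field_simp
  norm_cast

theorem quadraticReflection_apply_self {u : V} (hu : Q u ≠ 0) :
    quadraticReflection Q u u = -u :=
  Module.preReflection_apply_self (inv_smul_polarBilin_apply_self hu)

theorem quadraticReflection_mul_self {u : V} (hu : Q u ≠ 0) :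
    quadraticReflection Q u * quadraticReflection Q u = 1 :=
  LinearMap.ext (Module.involutive_preReflection (inv_smul_polarBilin_apply_self hu))

theorem map_quadraticReflection {u : V} (hu : Q u ≠ 0) (x : V) :
    Q (quadraticReflection Q u x) = Q x := by
  rw [quadraticReflection_apply, sub_eq_add_neg, ← neg_smul, QuadraticMap.map_add Q,
    QuadraticMap.map_smul, polar_smul_right, polar_comm Q x u]
  simp only [smul_eq_mul]
  field_simp
  ring

theorem map_sub_eq_polar_sub {v w : V} (h : Q v = Q w) : Q (v - w) = polar Q (v - w) v := by
  have hpolar : Q (v - w) = Q v + Q w - polar Q v w := by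
    rw [sub_eq_add_neg, QuadraticMap.map_add Q, QuadraticMap.map_neg, polar_neg_right,
      ← sub_eq_add_neg]
  rw [hpolar, polar_sub_left, polar_self, polar_comm Q w v, ← h, two_nsmul]

theorem quadraticReflection_sub_apply {v w : V} (h : Q v = Q w) (hvw : Q (v - w) ≠ 0) :
    quadraticReflection Q (v - w) v = w := by
  rw [quadraticReflection_apply, ← map_sub_eq_polar_sub h, inv_mul_cancel₀ hvw, one_smul,
    sub_sub_cancel]

variable (Q) in
/-- The submonoid of `End V` generated by the reflections in anisotropic vectors. Each generator is
its own inverse, so this is the group that they generate. -/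
def reflectionMonoid : Submonoid (Module.End K V) :=
  Submonoid.closure {r | ∃ u, Q u ≠ 0 ∧ quadraticReflection Q u = r}

theorem quadraticReflection_mem_reflectionMonoid {u : V} (hu : Q u ≠ 0) :
    quadraticReflection Q u ∈ reflectionMonoid Q :=
  Submonoid.subset_closure ⟨u, hu, rfl⟩

theorem map_of_mem_reflectionMonoid {r : Module.End K V} (hr : r ∈ reflectionMonoid Q) (x : V) :
    Q (r x) = Q x := by
  induction hr using Submonoid.closure_induction generalizing x with
  | mem r hr =>
    obtain ⟨u, hu, rfl⟩ := hr
    exact map_quadraticReflection hu x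
  | one => rfl
  | mul r s _ _ hr hs => rw [Module.End.mul_apply, hr, hs]

theorem mem_reflectionMonoid_of_mul_mem {r f : Module.End K V} (hr : r ∈ reflectionMonoid Q)
    (hf : r * f ∈ reflectionMonoid Q) : f ∈ reflectionMonoid Q := by
  induction hr using Submonoid.closure_induction generalizing f with
  | mem r hr =>
    obtain ⟨u, hu, rfl⟩ := hr
    simpa only [← mul_assoc, quadraticReflection_mul_self hu, one_mul] using
      mul_mem (quadraticReflection_mem_reflectionMonoid hu) hf
  | one => rwa [one_mul] at hf
  | mul r s _ _ hr hs => exact hs (hr (by rwa [← mul_assoc]))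

theorem map_add_ne_zero_of_map_sub_eq_zero [NeZero (2 : K)] {v w : V} (hw : Q w ≠ 0)
    (h : Q v = Q w) (hvw : Q (v - w) = 0) : Q (v + w) ≠ 0 := by
  have parallelogram : Q (v + w) + Q (v - w) = 2 * 2 * Q w := by
    rw [sub_eq_add_neg, QuadraticMap.map_add Q v w, QuadraticMap.map_add Q v (-w),
      QuadraticMap.map_neg, polar_neg_right, h]
    ring
  rw [hvw, add_zero] at parallelogram
  rw [parallelogram]
  exact mul_ne_zero (mul_ne_zero two_ne_zero two_ne_zero) hw

theorem exists_mem_reflectionMonoid_apply_eq [NeZero (2 : K)] {v w : V} (hw : Q w ≠ 0)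
    (h : Q v = Q w) :
    ∃ r ∈ reflectionMonoid Q, r v = w ∧ ∀ x, polar Q v x = 0 → polar Q w x = 0 → r x = x := by
  by_cases hsub : Q (v - w) = 0
  -- Here `Q (v + w) ≠ 0`: one reflection sends `v` to `-w`, and the one in `w` sends `-w` to `w`.
  · have hadd : Q (v - -w) ≠ 0 := by
      simpa only [sub_neg_eq_add] using map_add_ne_zero_of_map_sub_eq_zero hw h hsub
    refine ⟨quadraticReflection Q w * quadraticReflection Q (v - -w),
      mul_mem (quadraticReflection_mem_reflectionMonoid hw)
        (quadraticReflection_mem_reflectionMonoid hadd), ?_, fun x hvx hwx => ?_⟩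
    · rw [Module.End.mul_apply, quadraticReflection_sub_apply (by rwa [QuadraticMap.map_neg]) hadd,
        map_neg, quadraticReflection_apply_self hw, neg_neg]
    · have hvwx : polar Q (v - -w) x = 0 := by
        rw [polar_sub_left, polar_neg_left, hvx, hwx, neg_zero, sub_zero]
      rw [Module.End.mul_apply, quadraticReflection_apply_of_polar_eq_zero hvwx,
        quadraticReflection_apply_of_polar_eq_zero hwx]
  · refine ⟨quadraticReflection Q (v - w), quadraticReflection_mem_reflectionMonoid hsub,
      quadraticReflection_sub_apply h hsub, fun x hvx hwx => ?_⟩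
    exact quadraticReflection_apply_of_polar_eq_zero (by rw [polar_sub_left, hvx, hwx, sub_zero])

theorem polar_apply_apply_of_map_eq {f : Module.End K V} (hf : ∀ x, Q (f x) = Q x) (x y : V) :
    polar Q (f x) (f y) = polar Q x y := by
  simp only [polar, ← map_add, hf]

theorem mem_reflectionMonoid_of_forall_notMem_apply_eq [NeZero (2 : K)] {ι : Type*}
    {b : Module.Basis ι K V} (hb : Q.polarBilin.IsOrthoᵢ b) (hQb : ∀ i, Q (b i) ≠ 0) (s : Finset ι)
    {f : Module.End K V} (hf : ∀ x, Q (f x) = Q x) (hfix : ∀ i ∉ s, f (b i) = b i) :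
    f ∈ reflectionMonoid Q := by
  classical
  induction s using Finset.induction_on generalizing f with
  | empty =>
    have : f = 1 := b.ext fun i => hfix i (Finset.notMem_empty i)
    exact this ▸ one_mem _
  | insert i s _ ih =>
    obtain ⟨r, hr, hri, hr_fix⟩ := exists_mem_reflectionMonoid_apply_eq (hQb i) (hf (b i))
    refine mem_reflectionMonoid_of_mul_mem hr (ih (fun x => ?_) fun j hj => ?_)
    · rw [Module.End.mul_apply, map_of_mem_reflectionMonoid hr, hf]
    · rw [Module.End.mul_apply]
      obtain rfl | hji := eq_or_ne j i
      · exact hri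
      · have hfj : f (b j) = b j := hfix j (by simp [hji, hj])
        have hij : polar Q (b i) (b j) = 0 := hb hji.symm
        have hfij : polar Q (f (b i)) (b j) = 0 := by
          rw [← hfj, polar_apply_apply_of_map_eq hf, hij]
        rw [hfj, hr_fix _ hfij hij]

theorem exists_orthogonal_basis_forall_map_ne_zero [NeZero (2 : K)] [FiniteDimensional K V]
    (hQ : Q.Nondegenerate) :
    ∃ b : Module.Basis (Fin (Module.finrank K V)) K V,
      Q.polarBilin.IsOrthoᵢ b ∧ ∀ i, Q (b i) ≠ 0 := by
  let : Invertible (2 : K) := invertibleOfNonzero two_ne_zero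
  obtain ⟨b, hb⟩ := LinearMap.BilinForm.exists_orthogonal_basis (B := Q.polarBilin)
    ⟨fun x y => polar_comm Q x y⟩
  refine ⟨b, hb, fun i hi => ?_⟩
  apply hb.not_isOrtho_basis_self_of_separatingLeft (nondegenerate_polar_iff.mpr hQ).1 i
  rw [polarBilin_apply_apply, polar_self, hi, smul_zero]

/-- **Cartan–Dieudonné theorem**, without the bound on the number of reflections. -/
theorem mem_reflectionMonoid_of_forall_map_eq [NeZero (2 : K)] [FiniteDimensional K V]
    (hQ : Q.Nondegenerate) {f : Module.End K V} (hf : ∀ x, Q (f x) = Q x) :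
    f ∈ reflectionMonoid Q := by
  obtain ⟨b, hb, hQb⟩ := exists_orthogonal_basis_forall_map_ne_zero hQ
  exact mem_reflectionMonoid_of_forall_notMem_apply_eq hb hQb Finset.univ hf
    fun i hi => absurd (Finset.mem_univ i) hi

end Reflection

section Contraction

variable {R M : Type*} [CommRing R] [AddCommGroup M] [Module R M] {Q : QuadraticForm R M}

theorem contractLeft_mul (d : Module.Dual R M) (S T : CliffordAlgebra Q) :
    contractLeft d (S * T) = contractLeft d S * T + involute S * contractLeft d T := by
  induction S using CliffordAlgebra.left_induction with
  | algebraMap r => simp [contractLeft_algebraMap_mul, contractLeft_algebraMap]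
  | add x y hx hy => rw [add_mul, map_add, hx, hy, map_add, map_add]; noncomm_ring
  | ι_mul x v hx =>
    rw [mul_assoc, contractLeft_ι_mul, hx, contractLeft_ι_mul, map_mul, involute_ι, sub_mul,
      smul_mul_assoc]
    noncomm_ring

theorem ι_mul_sub_involute_mul_ι (v : M) (T : CliffordAlgebra Q) :
    ι Q v * T - involute T * ι Q v = contractLeft (Q.polarBilin v) T := by
  induction T using CliffordAlgebra.left_induction with
  | algebraMap r => simp [contractLeft_algebraMap, Algebra.commutes]
  | add x y hx hy => rw [map_add, map_add, ← hx, ← hy]; noncomm_ring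
  | ι_mul x w hx =>
    rw [contractLeft_ι_mul, ← hx, map_mul, involute_ι, Algebra.smul_def,
      QuadraticMap.polarBilin_apply_apply, ← ι_mul_ι_add_swap v w]
    noncomm_ring

theorem contractLeft_eq_zero_of_mem_adjoin {d : Module.Dual R M} {s : Set M}
    (hd : ∀ v ∈ s, d v = 0) {T : CliffordAlgebra Q} (hT : T ∈ Algebra.adjoin R (ι Q '' s)) :
    contractLeft d T = 0 := by
  induction hT using Algebra.adjoin_induction with
  | mem T hT =>
    obtain ⟨v, hv, rfl⟩ := hT
    rw [contractLeft_ι, hd v hv, map_zero]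
  | algebraMap r => exact contractLeft_algebraMap Q d r
  | add S T _ _ hS hT => rw [map_add, hS, hT, add_zero]
  | mul S T _ _ hS hT => rw [contractLeft_mul, hS, hT, zero_mul, mul_zero, add_zero]

theorem exists_add_ι_mul_of_mem_adjoin_insert {v : M} {s : Set M} {T : CliffordAlgebra Q}
    (hT : T ∈ Algebra.adjoin R (ι Q '' insert v s)) :
    ∃ A ∈ Algebra.adjoin R (ι Q '' s), ∃ B ∈ Algebra.adjoin R (ι Q '' s), A + ι Q v * B = T := by
  set 𝒜 := Algebra.adjoin R (ι Q '' s)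
  suffices ∀ A ∈ 𝒜, ∀ B ∈ 𝒜, ∃ A' ∈ 𝒜, ∃ B' ∈ 𝒜, A' + ι Q v * B' = T * (A + ι Q v * B) by
    simpa using this 1 (one_mem _) 0 (zero_mem _)
  induction hT using Algebra.adjoin_induction with
  | mem T hT =>
    intro A hA B hB
    obtain ⟨w, rfl | hw, rfl⟩ := hT
    · refine ⟨Q w • B, Subalgebra.smul_mem _ hB _, A, hA, ?_⟩
      rw [mul_add, ← mul_assoc, ι_sq_scalar, Algebra.smul_def, add_comm]
    · have hw𝒜 : ι Q w ∈ 𝒜 := Algebra.subset_adjoin ⟨w, hw, rfl⟩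
      refine ⟨ι Q w * A + QuadraticMap.polar Q w v • B,
        add_mem (mul_mem hw𝒜 hA) (Subalgebra.smul_mem _ hB _), -(ι Q w * B),
        neg_mem (mul_mem hw𝒜 hB), ?_⟩
      rw [Algebra.smul_def, ← ι_mul_ι_add_swap w v]
      noncomm_ring
  | algebraMap r =>
    intro A hA B hB
    refine ⟨r • A, Subalgebra.smul_mem _ hA _, r • B, Subalgebra.smul_mem _ hB _, ?_⟩
    rw [← Algebra.smul_def, smul_add, mul_smul_comm]
  | add S T _ _ hS hT =>
    intro A hA B hB
    obtain ⟨A₁, hA₁, B₁, hB₁, h₁⟩ := hS A hA B hB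
    obtain ⟨A₂, hA₂, B₂, hB₂, h₂⟩ := hT A hA B hB
    refine ⟨A₁ + A₂, add_mem hA₁ hA₂, B₁ + B₂, add_mem hB₁ hB₂, ?_⟩
    rw [add_mul, ← h₁, ← h₂]
    noncomm_ring
  | mul S T _ _ hS hT =>
    intro A hA B hB
    obtain ⟨A₁, hA₁, B₁, hB₁, h₁⟩ := hT A hA B hB
    rw [mul_assoc, ← h₁]
    exact hS A₁ hA₁ B₁ hB₁

theorem mem_adjoin_of_mem_adjoin_insert_of_contractLeft_eq_zero {d : Module.Dual R M} {v : M}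
    {s : Set M} (hdv : d v = 1) (hds : ∀ w ∈ s, d w = 0) {T : CliffordAlgebra Q}
    (hT : T ∈ Algebra.adjoin R (ι Q '' insert v s)) (hdT : contractLeft d T = 0) :
    T ∈ Algebra.adjoin R (ι Q '' s) := by
  obtain ⟨A, hA, B, hB, rfl⟩ := exists_add_ι_mul_of_mem_adjoin_insert hT
  have hB_zero : B = 0 := by
    simpa [contractLeft_ι_mul, hdv, contractLeft_eq_zero_of_mem_adjoin hds hA,
      contractLeft_eq_zero_of_mem_adjoin hds hB] using hdT
  rwa [hB_zero, mul_zero, add_zero]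

theorem adjoin_ι_image_range_basis {ι' : Type*} (b : Module.Basis ι' R M) :
    Algebra.adjoin R (ι Q '' Set.range b) = ⊤ := by
  rw [← Algebra.adjoin_span, Submodule.span_image, b.span_eq, Submodule.map_top]
  exact adjoin_range_ι

theorem mem_bot_of_forall_contractLeft_eq_zero [Module.Free R M] [Module.Finite R M]
    {T : CliffordAlgebra Q} (hT : ∀ d : Module.Dual R M, contractLeft d T = 0) :
    T ∈ (⊥ : Subalgebra R (CliffordAlgebra Q)) := by
  classical
  let b := Module.Free.chooseBasis R M
  suffices ∀ s : Finset (Module.Free.ChooseBasisIndex R M),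
      T ∈ Algebra.adjoin R (ι Q '' (b '' s)) → T ∈ (⊥ : Subalgebra R (CliffordAlgebra Q)) by
    refine this Finset.univ ?_
    rw [Finset.coe_univ, Set.image_univ, adjoin_ι_image_range_basis]
    exact Algebra.mem_top
  intro s hs
  induction s using Finset.induction_on with
  | empty => simpa using hs
  | insert i s hi ih =>
    rw [Finset.coe_insert, Set.image_insert_eq] at hs
    refine ih (mem_adjoin_of_mem_adjoin_insert_of_contractLeft_eq_zero (d := b.coord i)
      (by simp) ?_ hs (hT _))
    rintro _ ⟨j, hj, rfl⟩
    rw [b.coord_apply, b.repr_self, Finsupp.single_eq_of_ne (ne_of_mem_of_not_mem hj hi).symm]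

theorem mem_bot_of_forall_involute_mul_ι_eq {K V : Type*} [Field K] [NeZero (2 : K)]
    [AddCommGroup V] [Module K V] [FiniteDimensional K V] {Q : QuadraticForm K V}
    (hQ : Q.Nondegenerate) {T : CliffordAlgebra Q}
    (hT : ∀ x, involute T * ι Q x = ι Q x * T) :
    T ∈ (⊥ : Subalgebra K (CliffordAlgebra Q)) := by
  let : Invertible (2 : K) := invertibleOfNonzero two_ne_zero
  refine mem_bot_of_forall_contractLeft_eq_zero fun d => ?_
  obtain ⟨v, rfl⟩ :=
    (LinearMap.BilinForm.toDual _ (QuadraticMap.nondegenerate_polar_iff.mpr hQ)).surjective d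
  exact (ι_mul_sub_involute_mul_ι v T).symm.trans (by rw [hT, sub_self])

end Contraction

section Pin

variable {R M : Type*} [CommRing R] [AddCommGroup M] [Module R M] {Q : QuadraticForm R M}

/-- The twisted conjugation `a ↦ involute T * a * T⁻¹`, through which the Pin group acts on vectors.
It is the intended map only for invertible `T`, and `0` otherwise. -/
noncomputable def twistedConj (T a : CliffordAlgebra Q) : CliffordAlgebra Q :=
  involute T * a * Ring.inverse T

theorem twistedConj_one (a : CliffordAlgebra Q) : twistedConj 1 a = a := by
  rw [twistedConj, map_one, Ring.inverse_one, one_mul, mul_one]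

theorem twistedConj_mul {S : CliffordAlgebra Q} (hS : IsUnit S) (T a : CliffordAlgebra Q) :
    twistedConj (S * T) a = twistedConj S (twistedConj T a) := by
  simp only [twistedConj, map_mul, Ring.inverse_mul (Or.inl hS), mul_assoc]

theorem twistedConj_eq_iff {T : CliffordAlgebra Q} (hT : IsUnit T) {a b : CliffordAlgebra Q} :
    twistedConj T a = b ↔ involute T * a = b * T := by
  rw [eq_comm, twistedConj, Ring.eq_mul_inverse_iff_mul_eq _ _ _ hT, eq_comm]

variable (Q) in
/-- The group `Pin(Q)` of invertible homogeneous elements `T` of the Clifford algebra whose twisted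
conjugation preserves the vectors and with `reverse T * T = ±1`. Mathlib's `pinGroup` instead asks
for `star T * T = 1`, where `star` is the reversion composed with the grade involution. -/
def signedPinGroup : Submonoid (CliffordAlgebra Q) where
  carrier := {T | IsUnit T ∧
    (T ∈ evenOdd Q 0 ∨ T ∈ evenOdd Q 1) ∧
    (∀ x, ∃ y, twistedConj T (ι Q x) = ι Q y) ∧
    (reverse T * T = 1 ∨ reverse T * T = -1)}
  one_mem' :=
    ⟨isUnit_one, Or.inl SetLike.GradedOne.one_mem, fun x => ⟨x, twistedConj_one _⟩, by simp⟩
  mul_mem' := by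
    rintro S T ⟨hS, hS_parity, hS_conj, hS_norm⟩ ⟨hT, hT_parity, hT_conj, hT_norm⟩
    refine ⟨hS.mul hT, ?_, fun x => ?_, ?_⟩
    · have one_add_one : (1 : ZMod 2) + 1 = 0 := rfl
      rcases hS_parity with hS | hS <;> rcases hT_parity with hT | hT <;>
        have hST := SetLike.mul_mem_graded hS hT <;>
        simp only [add_zero, zero_add, one_add_one] at hST <;>
        simp only [hST, true_or, or_true]
    · obtain ⟨y, hy⟩ := hT_conj x
      obtain ⟨z, hz⟩ := hS_conj y
      exact ⟨z, by rw [twistedConj_mul hS, hy, hz]⟩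
    · have norm_mul : reverse (S * T) * (S * T) = reverse T * (reverse S * S) * T := by
        simp only [reverse.map_mul, mul_assoc]
      rw [norm_mul]
      rcases hS_norm with hS | hS <;> rcases hT_norm with hT | hT <;> simp [hS, hT]

variable {K V : Type*} [Field K] [AddCommGroup V] [Module K V]

theorem twistedConj_ι {Q : QuadraticForm K V} {u : V} (hu : Q u ≠ 0) (x : V) :
    twistedConj (ι Q u) (ι Q x) = ι Q (quadraticReflection Q u x) := by
  have hcoeff : (Q u)⁻¹ * QuadraticMap.polar Q u x * Q u = QuadraticMap.polar Q u x := by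
    field_simp
  rw [twistedConj_eq_iff (isUnit_ι_of_isUnit Q hu.isUnit), involute_ι,
    quadraticReflection_apply, map_sub, map_smul, sub_mul, smul_mul_assoc, ι_sq_scalar,
    Algebra.smul_def, ← map_mul (algebraMap K _), hcoeff, neg_mul, ι_mul_ι_comm u x, neg_sub]

theorem ι_mem_signedPinGroup {Q : QuadraticForm K V} {u : V} (hu : Q u = 1 ∨ Q u = -1) :
    ι Q u ∈ signedPinGroup Q := by
  have hu_ne : Q u ≠ 0 := by rcases hu with hu | hu <;> simp [hu]
  refine ⟨isUnit_ι_of_isUnit Q hu_ne.isUnit, Or.inr (ι_mem_evenOdd_one Q u),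
    fun x => ⟨_, twistedConj_ι hu_ne x⟩, ?_⟩
  rw [reverse_ι, ι_sq_scalar]
  rcases hu with hu | hu <;> simp [hu]

theorem exists_smul_map_eq_one_or_neg_one {E : Type*} [AddCommGroup E] [Module ℝ E]
    {Q : QuadraticForm ℝ E} {u : E} (hu : Q u ≠ 0) :
    ∃ c : ℝ, c ≠ 0 ∧ (Q (c • u) = 1 ∨ Q (c • u) = -1) := by
  have habs : 0 < |Q u| := abs_pos.mpr hu
  refine ⟨(√|Q u|)⁻¹, by positivity, ?_⟩
  rw [QuadraticMap.map_smul, ← mul_inv, Real.mul_self_sqrt habs.le, smul_eq_mul]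
  rcases abs_choice (Q u) with h | h
  · left; rw [h, inv_mul_cancel₀ hu]
  · right; rw [h, inv_neg, neg_mul, inv_mul_cancel₀ hu]

theorem exists_mem_signedPinGroup_of_mem_reflectionMonoid {E : Type*} [AddCommGroup E]
    [Module ℝ E] {Q : QuadraticForm ℝ E} {f : Module.End ℝ E} (hf : f ∈ reflectionMonoid Q) :
    ∃ T ∈ signedPinGroup Q, ∀ x, twistedConj T (ι Q x) = ι Q (f x) := by
  induction hf using Submonoid.closure_induction with
  | mem r hr =>
    obtain ⟨u, hu, rfl⟩ := hr
    obtain ⟨c, hc, hcu⟩ := exists_smul_map_eq_one_or_neg_one hu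
    have hcu_ne : Q (c • u) ≠ 0 := by rcases hcu with h | h <;> simp [h]
    refine ⟨ι Q (c • u), ι_mem_signedPinGroup hcu, fun x => ?_⟩
    rw [twistedConj_ι hcu_ne, quadraticReflection_smul hc]
  | one => exact ⟨1, one_mem _, fun _ => twistedConj_one _⟩
  | mul f g _ _ hf hg =>
    obtain ⟨S, hS, hSf⟩ := hf
    obtain ⟨T, hT, hTg⟩ := hg
    exact ⟨S * T, mul_mem hS hT, fun x => by
      rw [twistedConj_mul hS.1, hTg, hSf, Module.End.mul_apply]⟩

theorem eq_one_or_neg_one_of_algebraMap_mem_signedPinGroup [LinearOrder K] [IsStrictOrderedRing K]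
    {Q : QuadraticForm K V} {c : K} (hc : algebraMap K (CliffordAlgebra Q) c ∈ signedPinGroup Q) :
    c = 1 ∨ c = -1 := by
  have hinj := (algebraMap K (CliffordAlgebra Q)).injective
  obtain ⟨-, -, -, hnorm⟩ := hc
  simp only [reverse.commutes, ← map_mul, ← map_one (algebraMap K (CliffordAlgebra Q)),
    ← map_neg, hinj.eq_iff] at hnorm
  exact mul_self_eq_one_iff.mp (hnorm.resolve_right (by linarith [mul_self_nonneg c]))

theorem pin_double_covers_orthogonal_general {E : Type*} [AddCommGroup E] [Module ℝ E]
    [FiniteDimensional ℝ E] {Q : QuadraticForm ℝ E} (hQ : Q.Nondegenerate) :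
    (∀ f : E →ₗ[ℝ] E, (∀ x, Q (f x) = Q x) →
      ∃ T ∈ signedPinGroup Q, ∀ x, twistedConj T (ι Q x) = ι Q (f x)) ∧
    (∀ T ∈ signedPinGroup Q, (∀ x, twistedConj T (ι Q x) = ι Q x) →
      T = 1 ∨ T = -1) := by
  refine ⟨fun f hf => exists_mem_signedPinGroup_of_mem_reflectionMonoid
    (mem_reflectionMonoid_of_forall_map_eq hQ hf), fun T hT hT_conj => ?_⟩
  have hT_comm : ∀ x, involute T * ι Q x = ι Q x * T := fun x =>
    (twistedConj_eq_iff hT.1).mp (hT_conj x)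
  obtain ⟨c, rfl⟩ := Algebra.mem_bot.mp (mem_bot_of_forall_involute_mul_ι_eq hQ hT_comm)
  rcases eq_one_or_neg_one_of_algebraMap_mem_signedPinGroup hT with rfl | rfl <;> simp

end Pin

theorem nondegenerate_Qpq (p q : ℕ) : (Qpq p q).Nondegenerate := by
  rw [QuadraticMap.nondegenerate_iff_radical_eq_bot, Qpq, QuadraticForm.radical_weightedSumSquares]
  ext x
  simp [Pi.mem_spanSubset_iff, ite_eq_iff, funext_iff]

/-- Double covering of the orthogonal group by `Pin(p,q)`: every linear map
preserving `Q_{p,q}` is induced by some `T ∈ Pin(p,q)` via twisted conjugation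
(surjectivity), and the kernel of this action is `{±e}`. -/
theorem pin_double_covers_orthogonal (p q : ℕ) :
    (∀ f : (Fin (p + q) → ℝ) →ₗ[ℝ] (Fin (p + q) → ℝ),
      (∀ x, Qpq p q (f x) = Qpq p q x) →
      ∃ T ∈ pinGrp p q, ∀ x : Fin (p + q) → ℝ,
        involute T * ι (Qpq p q) x * Ring.inverse T = ι (Qpq p q) (f x)) ∧
    (∀ T ∈ pinGrp p q,
      (∀ x : Fin (p + q) → ℝ,
        involute T * ι (Qpq p q) x * Ring.inverse T = ι (Qpq p q) x) →
      T = 1 ∨ T = -1) :=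
  pin_double_covers_orthogonal_general (nondegenerate_Qpq p q)
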